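/- arXiv:2212.11225 — 2 statements merged into one kernel-verified Lean document; each statement's English description precedes it below -/
import Mathlib

section
/- Let I ∈ Ins(Ω,H,K) and J ∈ Ins(Λ,H,V) be two instruments such that the Lüders instruments I^{A^I} and I^{A^J} of their induced POVMs are compatible. Then I and J are compatible. -/
open scoped Kronecker ComplexOrder
open Matrix

noncomputable section

/-- The positive semidefinite square root of a positive semidefinite matrix
(the definition of the older Mathlib, since removed there). -/
def Matrix.PosSemidef.sqrt {n 𝕜 : Type*} [Fintype n] [RCLike 𝕜] [DecidableEq n]
    {A : Matrix n n 𝕜} (hA : A.PosSemidef) : Matrix n n 𝕜 :=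
  hA.1.eigenvectorUnitary.1 * diagonal ((↑) ∘ Real.sqrt ∘ hA.1.eigenvalues) *
  (star hA.1.eigenvectorUnitary : Matrix n n 𝕜)

/-- Linear maps between matrix algebras, representing super-operators
`L(H) → L(K)` for finite-dimensional Hilbert spaces with index types `dH`, `dK`. -/
abbrev MatMap (dH dK : Type) : Type := Matrix dH dH ℂ →ₗ[ℂ] Matrix dK dK ℂ

variable {Ω Λ dH dK dV dA dA' : Type}

/-- The Choi matrix of a super-operator. -/
def choiMatrix [DecidableEq dH] (Φ : MatMap dH dK) : Matrix (dH × dK) (dH × dK) ℂ :=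
  fun p q => Φ (Matrix.single p.1 q.1 1) p.2 q.2

/-- Complete positivity of a super-operator (positivity of its Choi matrix). -/
def IsCP [Fintype dH] [DecidableEq dH] [Fintype dK] (Φ : MatMap dH dK) : Prop :=
  (choiMatrix Φ).PosSemidef

/-- A quantum state: a positive semidefinite matrix of unit trace. -/
def IsState [Fintype dH] (ρ : Matrix dH dH ℂ) : Prop := ρ.PosSemidef ∧ ρ.trace = 1

/-- Trace-nonincreasing super-operator. -/
def IsTNI [Fintype dH] [Fintype dK] (Φ : MatMap dH dK) : Prop :=
  ∀ ρ : Matrix dH dH ℂ, ρ.PosSemidef → (Φ ρ).trace ≤ ρ.trace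

/-- Trace-preserving super-operator. -/
def IsTP [Fintype dH] [Fintype dK] (Φ : MatMap dH dK) : Prop :=
  ∀ ρ : Matrix dH dH ℂ, (Φ ρ).trace = ρ.trace

/-- A quantum instrument with outcome set `Ω` from system `dH` to system `dK`:
a family of completely positive trace-nonincreasing maps summing to a channel. -/
structure Instrument (Ω dH dK : Type) [Fintype Ω] [Fintype dH] [DecidableEq dH]
    [Fintype dK] : Type where
  op : Ω → MatMap dH dK
  cp : ∀ x, IsCP (op x)
  tni : ∀ x, IsTNI (op x)
  tp : IsTP (∑ x, op x)

/-- A quantum channel: a completely positive trace-preserving super-operator. -/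
structure Channel (dH dK : Type) [Fintype dH] [DecidableEq dH] [Fintype dK] : Type where
  map : MatMap dH dK
  cp : IsCP map
  tp : IsTP map

/-- A POVM with outcome set `Ω` on system `d`. -/
structure POVM (Ω d : Type) [Fintype Ω] [Fintype d] [DecidableEq d] : Type where
  elem : Ω → Matrix d d ℂ
  pos : ∀ x, (elem x).PosSemidef
  sum_eq : ∑ x, elem x = 1

/-- The effect (induced POVM element) of an operation `Φ`:
the unique matrix `A` with `tr[A ρ] = tr[Φ ρ]` for all `ρ`. -/
def dualId [Fintype dH] [DecidableEq dH] [Fintype dK] (Φ : MatMap dH dK) :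
    Matrix dH dH ℂ :=
  fun i j => (Φ (Matrix.single j i 1)).trace

/-- Partial trace over the first tensor factor. -/
def ptraceL [Fintype dA] (M : Matrix (dA × dK) (dA × dK) ℂ) : Matrix dK dK ℂ :=
  fun i j => ∑ a, M (a, i) (a, j)

/-- Partial trace over the second tensor factor. -/
def ptraceR [Fintype dV] (M : Matrix (dK × dV) (dK × dV) ℂ) : Matrix dK dK ℂ :=
  fun i j => ∑ b, M (i, b) (j, b)

/-- Compatibility of two instruments: existence of a joint instrument whose
partial-trace marginals (summed over the other outcome) reproduce both instruments
on all states. -/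
def InsCompatible [Fintype Ω] [Fintype Λ] [Fintype dH] [DecidableEq dH] [Fintype dK]
    [Fintype dV] (I : Instrument Ω dH dK) (J : Instrument Λ dH dV) : Prop :=
  ∃ G : Instrument (Ω × Λ) dH (dK × dV),
    (∀ y, ∀ ρ : Matrix dH dH ℂ, IsState ρ → ∑ x, ptraceL (G.op (x, y) ρ) = J.op y ρ) ∧
    (∀ x, ∀ ρ : Matrix dH dH ℂ, IsState ρ → ∑ y, ptraceR (G.op (x, y) ρ) = I.op x ρ)

/-- Compatibility of an instrument and a channel (a one-outcome instrument). -/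
def InsChCompatible [Fintype Ω] [Fintype dH] [DecidableEq dH] [Fintype dK] [Fintype dV]
    (I : Instrument Ω dH dK) (Ψ : Channel dH dV) : Prop :=
  ∃ G : Instrument Ω dH (dK × dV),
    (∀ ρ : Matrix dH dH ℂ, IsState ρ → ∑ x, ptraceL (G.op x ρ) = Ψ.map ρ) ∧
    (∀ x, ∀ ρ : Matrix dH dH ℂ, IsState ρ → ptraceR (G.op x ρ) = I.op x ρ)

/-- Compatibility of two channels. -/
def ChCompatible [Fintype dH] [DecidableEq dH] [Fintype dK] [Fintype dV]
    (Φ : Channel dH dK) (Ψ : Channel dH dV) : Prop :=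
  ∃ Γ : Channel dH (dK × dV),
    (∀ ρ : Matrix dH dH ℂ, IsState ρ → ptraceL (Γ.map ρ) = Ψ.map ρ) ∧
    (∀ ρ : Matrix dH dH ℂ, IsState ρ → ptraceR (Γ.map ρ) = Φ.map ρ)

/-- Compatibility of a POVM and an instrument: existence of a joint instrument `G`
with `∑ x, G.op (x, y) = J.op y` and whose induced POVM has the POVM `A` as a margin. -/
def POVMInsCompatible [Fintype Ω] [Fintype Λ] [Fintype dH] [DecidableEq dH] [Fintype dK]
    (A : POVM Ω dH) (J : Instrument Λ dH dK) : Prop :=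
  ∃ G : Instrument (Ω × Λ) dH dK,
    (∀ y, ∑ x, G.op (x, y) = J.op y) ∧
    (∀ x, ∑ y, dualId (G.op (x, y)) = A.elem x)

/-- Compatibility (joint measurability) of two POVMs. -/
def POVMCompatible [Fintype Ω] [Fintype Λ] [Fintype dH] [DecidableEq dH]
    (A : POVM Ω dH) (B : POVM Λ dH) : Prop :=
  ∃ G : POVM (Ω × Λ) dH,
    (∀ y, ∑ x, G.elem (x, y) = B.elem y) ∧
    (∀ x, ∑ y, G.elem (x, y) = A.elem x)

/-- Compatibility of a POVM and a channel: existence of an instrument implementing both. -/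
def POVMChCompatible [Fintype Ω] [Fintype dH] [DecidableEq dH] [Fintype dK]
    (A : POVM Ω dH) (Ψ : Channel dH dK) : Prop :=
  ∃ G : Instrument Ω dH dK,
    (∑ x, G.op x) = Ψ.map ∧ ∀ x, dualId (G.op x) = A.elem x

/-- Instrument postprocessing: `I ⪯ J` if `I_x = ∑ y, R^(y)_x ∘ J_y` for
a family of instruments `R^(y)`. -/
def Postprocessed [Fintype Ω] [Fintype Λ] [Fintype dH] [DecidableEq dH] [Fintype dK]
    [Fintype dV] [DecidableEq dV] (I : Instrument Ω dH dK) (J : Instrument Λ dH dV) : Prop :=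
  ∃ R : Λ → Instrument Ω dV dK, ∀ x, I.op x = ∑ y, (R y).op x ∘ₗ J.op y

/-- An instrument `I` does not disturb an instrument `J`: `J_y ∘ Φ^I = J_y`. -/
def NonDisturbs [Fintype Ω] [Fintype Λ] [Fintype dH] [DecidableEq dH] [Fintype dV]
    (I : Instrument Ω dH dH) (J : Instrument Λ dH dV) : Prop :=
  ∀ y, J.op y ∘ₗ (∑ x, I.op x) = J.op y

/-- An instrument `I` does not disturb a channel `Ψ`: `Ψ ∘ Φ^I = Ψ`. -/
def InsNonDisturbsCh [Fintype Ω] [Fintype dH] [DecidableEq dH] [Fintype dV]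
    (I : Instrument Ω dH dH) (Ψ : Channel dH dV) : Prop :=
  Ψ.map ∘ₗ (∑ x, I.op x) = Ψ.map

/-- An instrument `I` does not disturb a POVM `A`:
the statistics of `A` are unchanged by the channel induced by `I`. -/
def InsNonDisturbsPOVM [Fintype Ω] [Fintype Λ] [Fintype dH] [DecidableEq dH]
    (I : Instrument Ω dH dH) (A : POVM Λ dH) : Prop :=
  ∀ y, ∀ ρ : Matrix dH dH ℂ,
    (A.elem y * ((∑ x, I.op x) ρ)).trace = (A.elem y * ρ).trace

/-- A POVM `A` does not disturb an instrument `J`: some instrument measuring `A`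
does not disturb `J`. -/
def POVMNonDisturbs [Fintype Ω] [Fintype Λ] [Fintype dH] [DecidableEq dH] [Fintype dV]
    (A : POVM Ω dH) (J : Instrument Λ dH dV) : Prop :=
  ∃ I : Instrument Ω dH dH, (∀ x, dualId (I.op x) = A.elem x) ∧ NonDisturbs I J

/-- A POVM `A` does not disturb a channel `Ψ`. -/
def POVMNonDisturbsCh [Fintype Ω] [Fintype dH] [DecidableEq dH] [Fintype dV]
    (A : POVM Ω dH) (Ψ : Channel dH dV) : Prop :=
  ∃ I : Instrument Ω dH dH, (∀ x, dualId (I.op x) = A.elem x) ∧ InsNonDisturbsCh I Ψ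

/-- A POVM `A` does not disturb a POVM `B`. -/
def POVMNonDisturbsPOVM [Fintype Ω] [Fintype Λ] [Fintype dH] [DecidableEq dH]
    (A : POVM Ω dH) (B : POVM Λ dH) : Prop :=
  ∃ I : Instrument Ω dH dH, (∀ x, dualId (I.op x) = A.elem x) ∧ InsNonDisturbsPOVM I B

/-- A sharp (projection-valued) POVM. -/
def IsSharp [Fintype Ω] [Fintype dH] [DecidableEq dH] (A : POVM Ω dH) : Prop :=
  ∀ x, A.elem x * A.elem x = A.elem x

/-- `(H_A, W, E)` is a dilation of the instrument `I`:
`W` is an isometry `H → H_A ⊗ K` and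
`I_x(ρ) = Tr_{H_A}[W ρ W* (E(x) ⊗ 1_K)]` on all states. -/
def IsDilation [Fintype Ω] [Fintype dH] [DecidableEq dH] [Fintype dK] [DecidableEq dK]
    [Fintype dA] [DecidableEq dA] (I : Instrument Ω dH dK)
    (W : Matrix (dA × dK) dH ℂ) (E : POVM Ω dA) : Prop :=
  Wᴴ * W = 1 ∧
  ∀ x, ∀ ρ : Matrix dH dH ℂ, IsState ρ →
    I.op x ρ = ptraceL (W * ρ * Wᴴ * (E.elem x ⊗ₖ (1 : Matrix dK dK ℂ)))

/-- Minimality of a Stinespring isometry `W : H → H_A ⊗ K`: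
the span of `{(1 ⊗ B) W φ}` is everything. -/
def IsMinimalW [Fintype dH] [Fintype dK] [DecidableEq dK] [Fintype dA] [DecidableEq dA]
    (W : Matrix (dA × dK) dH ℂ) : Prop :=
  Submodule.span ℂ {v : (dA × dK) → ℂ |
    ∃ (B : Matrix dK dK ℂ) (φ : dH → ℂ),
      v = ((1 : Matrix dA dA ℂ) ⊗ₖ B) *ᵥ (W *ᵥ φ)} = ⊤

/-- `IC` is the complementary instrument of the instrument dilated by `(W, E)`:
`IC_x(ρ) = Tr_K[(√E(x) ⊗ 1) W ρ W* (√E(x) ⊗ 1)]`. -/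
def IsComplementaryOf [Fintype Ω] [Fintype dH] [DecidableEq dH] [Fintype dK]
    [DecidableEq dK] [Fintype dA] [DecidableEq dA] (W : Matrix (dA × dK) dH ℂ) (E : POVM Ω dA)
    (IC : Instrument Ω dH dA) : Prop :=
  ∀ x, ∀ ρ : Matrix dH dH ℂ,
    IC.op x ρ =
      ptraceR (((E.pos x).sqrt ⊗ₖ (1 : Matrix dK dK ℂ)) * (W * ρ * Wᴴ) *
        ((E.pos x).sqrt ⊗ₖ (1 : Matrix dK dK ℂ)))

/-- A measure-and-prepare instrument: `I_x(ρ) = tr[A(x) ρ] ξ_x`. -/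
def IsMeasureAndPrepare [Fintype Ω] [Fintype dH] [DecidableEq dH] [Fintype dK]
    [DecidableEq dK] (I : Instrument Ω dH dK) : Prop :=
  ∃ (A : POVM Ω dH) (ξ : Ω → Matrix dK dK ℂ),
    (∀ x, IsState (ξ x)) ∧
    ∀ x, ∀ ρ : Matrix dH dH ℂ, I.op x ρ = ((A.elem x * ρ).trace) • ξ x

/-- A pure state: a state which is a (rank-one) projection. -/
def IsPureState [Fintype dK] (ρ : Matrix dK dK ℂ) : Prop :=
  IsState ρ ∧ ρ * ρ = ρ

/-- A rank-1 POVM: every effect has rank at most one. -/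
def IsRankOnePOVM [Fintype Ω] [Fintype dH] [DecidableEq dH] (A : POVM Ω dH) : Prop :=
  ∀ x, (A.elem x).rank ≤ 1

/-- POVM postprocessing: `B(y) = ∑ x, ν x y • A(x)` for a stochastic matrix `ν`. -/
def POVMPostprocessed [Fintype Ω] [Fintype Λ] [Fintype dH] [DecidableEq dH]
    (B : POVM Λ dH) (A : POVM Ω dH) : Prop :=
  ∃ ν : Ω → Λ → ℝ, (∀ x y, 0 ≤ ν x y) ∧ (∀ x, ∑ y, ν x y = 1) ∧
    ∀ y, B.elem y = ∑ x, (ν x y : ℂ) • A.elem x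

/-- A measure-and-prepare instrument preparing pure states. -/
def IsMeasureAndPreparePure [Fintype Ω] [Fintype dH] [DecidableEq dH] [Fintype dK]
    [DecidableEq dK] (I : Instrument Ω dH dK) : Prop :=
  ∃ (A : POVM Ω dH) (ξ : Ω → Matrix dK dK ℂ),
    (∀ x, IsPureState (ξ x)) ∧
    ∀ x, ∀ ρ : Matrix dH dH ℂ, I.op x ρ = ((A.elem x * ρ).trace) • ξ x

/-!
Stacking Kraus operators of `I_x` gives a matrix `V` with `Vᴴ V = A^I(x) = √A^I(x) √A^I(x)`. Two
matrices with equal Gram matrices differ by an isometry, so `V = W √A^I(x)` with `Wᴴ W = 1` as soon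
as `V` has at least as many rows as columns, which holds for the `dim H * dim K` Kraus operators
read off from the Choi matrix. The blocks of `W` are then Kraus operators of a channel `E^(x)` with
`I_x = E^(x) ∘ I^A_x`. Following a joint instrument of the Lüders instruments by `E^(x) ⊗ F^(y)`
gives a joint instrument of `I` and `J`: the partial trace over one output system absorbs the
trace-preserving channel acting on it and commutes with the other one.
-/

section Polar

variable {𝕜 : Type*} [RCLike 𝕜]

theorem exists_linearIsometry_comp_eq {E F : Type*} [AddCommGroup E] [Module 𝕜 E]
    [NormedAddCommGroup F] [InnerProductSpace 𝕜 F] [FiniteDimensional 𝕜 F]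
    (f g : E →ₗ[𝕜] F) (hfg : ∀ x, ‖f x‖ = ‖g x‖) :
    ∃ U : F →ₗᵢ[𝕜] F, U.toLinearMap ∘ₗ f = g := by
  have hker : f.ker ≤ g.ker := fun x hx ↦ by
    rw [LinearMap.mem_ker] at hx ⊢
    rw [← norm_eq_zero, ← hfg, hx, norm_zero]
  let L : f.range →ₗ[𝕜] F := f.ker.liftQ g hker ∘ₗ f.quotKerEquivRange.symm.toLinearMap
  have hL (x : E) : L (f.rangeRestrict x) = g x :=
    congrArg (f.ker.liftQ g hker) (f.quotKerEquivRange_symm_apply_image x _)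
  have hL_norm (y : f.range) : ‖L y‖ = ‖y‖ := by
    obtain ⟨x, rfl⟩ := f.surjective_rangeRestrict y
    rw [hL, ← hfg]
    rfl
  let L' : f.range →ₗᵢ[𝕜] F := ⟨L, hL_norm⟩
  exact ⟨L'.extend, LinearMap.ext fun x ↦ (L'.extend_apply (f.rangeRestrict x)).trans (hL x)⟩

variable {l m n : Type*} [Fintype l] [Fintype m]

theorem norm_toEuclideanLin_eq_of_conjTranspose_mul_self_eq [Fintype n] [DecidableEq n]
    {A : Matrix l n 𝕜} {B : Matrix m n 𝕜} (h : Aᴴ * A = Bᴴ * B) (x : EuclideanSpace 𝕜 n) :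
    ‖toEuclideanLin A x‖ = ‖toEuclideanLin B x‖ := by
  classical
  have hadj : (toEuclideanLin A).adjoint ∘ₗ toEuclideanLin A =
      (toEuclideanLin B).adjoint ∘ₗ toEuclideanLin B := by
    simp only [← toEuclideanLin_conjTranspose_eq_adjoint, ← toLpLin_mul, h]
  have hinner : inner 𝕜 (toEuclideanLin A x) (toEuclideanLin A x) =
      inner 𝕜 (toEuclideanLin B x) (toEuclideanLin B x) := by
    rw [← LinearMap.adjoint_inner_left, ← LinearMap.adjoint_inner_left]
    exact congrArg (inner 𝕜 · x) (LinearMap.congr_fun hadj x)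
  rw [@norm_eq_sqrt_re_inner 𝕜, @norm_eq_sqrt_re_inner 𝕜, hinner]

theorem exists_mul_eq_of_conjTranspose_mul_self_eq [Finite n] [DecidableEq m]
    {A B : Matrix m n 𝕜} (h : Aᴴ * A = Bᴴ * B) :
    ∃ U : Matrix m m 𝕜, Uᴴ * U = 1 ∧ U * A = B := by
  classical
  cases nonempty_fintype n
  obtain ⟨U, hU⟩ := exists_linearIsometry_comp_eq (toEuclideanLin A) (toEuclideanLin B)
    (norm_toEuclideanLin_eq_of_conjTranspose_mul_self_eq h)
  refine ⟨toEuclideanLin.symm U.toLinearMap, toEuclideanLin.injective ?_,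
    toEuclideanLin.injective ?_⟩
  · rw [toLpLin_mul_same, toEuclideanLin_conjTranspose_eq_adjoint, toLpLin_one,
      LinearEquiv.apply_symm_apply]
    exact congrArg ContinuousLinearMap.toLinearMap U.adjoint_comp_self
  · rw [toLpLin_mul (q := 2), LinearEquiv.apply_symm_apply, hU]

theorem exists_isometry_mul_eq_of_conjTranspose_mul_self_eq [Finite n] [DecidableEq l]
    {A : Matrix l n 𝕜} {B : Matrix m n 𝕜} (h : Aᴴ * A = Bᴴ * B)
    (hlm : Fintype.card l ≤ Fintype.card m) :
    ∃ W : Matrix m l 𝕜, Wᴴ * W = 1 ∧ W * A = B := by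
  classical
  obtain ⟨e⟩ := Function.Embedding.nonempty_of_card_le hlm
  let J : Matrix m l 𝕜 := (1 : Matrix m m 𝕜).submatrix id e
  have hJ : Jᴴ * J = 1 := by
    rw [conjTranspose_submatrix, conjTranspose_one, ← submatrix_mul _ _ _ _ _ Function.bijective_id,
      Matrix.one_mul, submatrix_one_embedding]
  have hJA : (J * A)ᴴ * (J * A) = Bᴴ * B := by
    rw [conjTranspose_mul, Matrix.mul_assoc, ← Matrix.mul_assoc Jᴴ, hJ, Matrix.one_mul, h]
  obtain ⟨U, hU, hUJA⟩ := exists_mul_eq_of_conjTranspose_mul_self_eq hJA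
  refine ⟨U * J, ?_, by rw [Matrix.mul_assoc, hUJA]⟩
  rw [conjTranspose_mul, Matrix.mul_assoc, ← Matrix.mul_assoc Uᴴ, hU, Matrix.one_mul, hJ]

end Polar

section SquareRoot

variable {𝕜 n : Type*} [RCLike 𝕜] [Fintype n] [DecidableEq n] {A : Matrix n n 𝕜}

theorem conjTranspose_posSemidef_sqrt (hA : A.PosSemidef) : hA.sqrtᴴ = hA.sqrt := by
  have hdiag : star ((↑) ∘ Real.sqrt ∘ hA.1.eigenvalues : n → 𝕜) =
      (↑) ∘ Real.sqrt ∘ hA.1.eigenvalues :=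
    funext fun i ↦ RCLike.conj_ofReal _
  simp only [PosSemidef.sqrt, star_eq_conjTranspose, conjTranspose_mul,
    conjTranspose_conjTranspose, diagonal_conjTranspose, hdiag, Matrix.mul_assoc]

theorem posSemidef_sqrt_mul_self (hA : A.PosSemidef) : hA.sqrt * hA.sqrt = A := by
  set U := hA.1.eigenvectorUnitary with hU
  set d : n → 𝕜 := (↑) ∘ Real.sqrt ∘ hA.1.eigenvalues with hd
  have hdd : diagonal d * diagonal d = diagonal (RCLike.ofReal ∘ hA.1.eigenvalues) := by
    rw [diagonal_mul_diagonal]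
    congr 1
    ext i
    simp only [hd, Function.comp_apply, ← RCLike.ofReal_mul,
      Real.mul_self_sqrt (hA.eigenvalues_nonneg i)]
  calc hA.sqrt * hA.sqrt
      = (U : Matrix n n 𝕜) * diagonal d * (star (U : Matrix n n 𝕜) * U) * diagonal d *
          star (U : Matrix n n 𝕜) := by
        simp only [PosSemidef.sqrt, Matrix.mul_assoc, ← hU, ← hd]
    _ = (U : Matrix n n 𝕜) * (diagonal d * diagonal d) * star (U : Matrix n n 𝕜) := by
        rw [Unitary.coe_star_mul_self, Matrix.mul_one, Matrix.mul_assoc (U : Matrix n n 𝕜)]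
    _ = A := by
        rw [hdd]
        exact hA.1.spectral_theorem.symm

end SquareRoot

section Kraus

theorem mul_single_mul_apply {R l m n p : Type*} [Semiring R] [Fintype m] [DecidableEq m]
    [Fintype n] [DecidableEq n] (A : Matrix l m R) (B : Matrix n p R) (i : m) (j : n) (a : l)
    (b : p) : (A * single i j (1 : R) * B) a b = A a i * B j b := by
  rw [single_eq_single_vecMulVec_single, mul_vecMulVec, vecMulVec_mul, mulVec_single_one,
    single_one_vecMul]
  rfl

theorem choiMatrix_injective {m n : Type} [Finite n] [DecidableEq n] :
    Function.Injective (choiMatrix (dH := n) (dK := m)) := by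
  intro Φ Ψ h
  refine ext_linearMap ℂ fun i j ↦ LinearMap.ext_ring (Matrix.ext fun a b ↦ ?_)
  exact congrFun₂ h (i, a) (j, b)

variable {κ τ l m n : Type} [Fintype κ] [Fintype τ] [Fintype n]

/-- The super-operator with Kraus operators `E k`. -/
def krausMap (E : κ → Matrix m n ℂ) : MatMap n m where
  toFun ρ := ∑ k, E k * ρ * (E k)ᴴ
  map_add' _ _ := by
    simp only [Matrix.mul_add, Matrix.add_mul, Finset.sum_add_distrib]
  map_smul' _ _ := by
    simp only [Matrix.mul_smul, Matrix.smul_mul, Finset.smul_sum, RingHom.id_apply]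

theorem krausMap_apply (E : κ → Matrix m n ℂ) (ρ : Matrix n n ℂ) :
    krausMap E ρ = ∑ k, E k * ρ * (E k)ᴴ := rfl

theorem krausMap_comp_krausMap [Fintype m] (E : κ → Matrix l m ℂ) (F : τ → Matrix m n ℂ) :
    krausMap E ∘ₗ krausMap F = krausMap fun p : κ × τ ↦ E p.1 * F p.2 := by
  ext1 ρ
  simp only [LinearMap.comp_apply, krausMap_apply, Fintype.sum_prod_type, Matrix.mul_sum,
    Matrix.sum_mul, conjTranspose_mul, Matrix.mul_assoc]

theorem trace_krausMap [Fintype m] (E : κ → Matrix m n ℂ) (ρ : Matrix n n ℂ) :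
    (krausMap E ρ).trace = ((∑ k, (E k)ᴴ * E k) * ρ).trace := by
  rw [krausMap_apply, trace_sum, Finset.sum_mul, trace_sum]
  refine Finset.sum_congr rfl fun k _ ↦ ?_
  rw [trace_mul_comm, Matrix.mul_assoc]

variable [DecidableEq n]

theorem dualId_krausMap [Fintype m] (E : κ → Matrix m n ℂ) :
    dualId (krausMap E) = ∑ k, (E k)ᴴ * E k := by
  ext i j
  simp only [dualId, trace_krausMap, trace_mul_single, MulOpposite.op_one, one_smul]

theorem choiMatrix_krausMap (E : κ → Matrix m n ℂ) :
    choiMatrix (krausMap E) =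
      Matrix.of (fun p k ↦ E k p.2 p.1) * (Matrix.of fun p k ↦ E k p.2 p.1)ᴴ := by
  ext p q
  simp only [choiMatrix, krausMap_apply, Matrix.sum_apply, mul_single_mul_apply]
  rfl

variable [Fintype m]

theorem isCP_krausMap (E : κ → Matrix m n ℂ) : IsCP (krausMap E) := by
  rw [IsCP, choiMatrix_krausMap]
  exact posSemidef_self_mul_conjTranspose _

theorem IsCP.exists_eq_krausMap {Φ : MatMap n m} (hΦ : IsCP Φ) :
    ∃ E : n × m → Matrix m n ℂ, Φ = krausMap E := by
  classical
  obtain ⟨B, hB⟩ : ∃ B, choiMatrix Φ = B * Bᴴ :=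
    have hpos : (choiMatrix Φ).PosSemidef := hΦ
    ⟨hpos.sqrt, by rw [conjTranspose_posSemidef_sqrt, posSemidef_sqrt_mul_self]⟩
  refine ⟨fun k ↦ Matrix.of fun a i ↦ B (i, a) k, choiMatrix_injective ?_⟩
  rw [choiMatrix_krausMap, hB]
  rfl

theorem IsCP.comp [DecidableEq m] [Fintype l] {Φ : MatMap m l} {Ψ : MatMap n m} (hΦ : IsCP Φ)
    (hΨ : IsCP Ψ) : IsCP (Φ ∘ₗ Ψ) := by
  obtain ⟨E, rfl⟩ := hΦ.exists_eq_krausMap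
  obtain ⟨F, rfl⟩ := hΨ.exists_eq_krausMap
  rw [krausMap_comp_krausMap]
  exact isCP_krausMap _

end Kraus

section Stinespring

variable {κ m n : Type} [Fintype κ] [Fintype m]

/-- The Stinespring operator `H → ℂ^κ ⊗ K` of a Kraus family `E`, whose blocks are the `E k`. -/
def krausStack (E : κ → Matrix m n ℂ) : Matrix (κ × m) n ℂ := Matrix.of fun p ↦ E p.1 p.2

theorem krausStack_conjTranspose_mul_self (E : κ → Matrix m n ℂ) :
    (krausStack E)ᴴ * krausStack E = ∑ k, (E k)ᴴ * E k := by
  ext i j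
  simp only [Matrix.mul_apply, Matrix.sum_apply, Fintype.sum_prod_type]
  rfl

variable [Fintype n] [DecidableEq n]

/-- The channel with Kraus operators `E k`. -/
def krausChannel (E : κ → Matrix m n ℂ) (hE : ∑ k, (E k)ᴴ * E k = 1) : Channel n m where
  map := krausMap E
  cp := isCP_krausMap E
  tp ρ := by rw [trace_krausMap, hE, Matrix.one_mul]

theorem IsCP.exists_channel_map_mul_mul_eq {Φ : MatMap n m} (hΦ : IsCP Φ)
    (hm : Nonempty n → Nonempty m) {S : Matrix n n ℂ} (hS : Sᴴ * S = dualId Φ) :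
    ∃ E : Channel n m, ∀ ρ, E.map (S * ρ * Sᴴ) = Φ ρ := by
  classical
  obtain ⟨K, rfl⟩ := hΦ.exists_eq_krausMap
  have hSK : Sᴴ * S = (krausStack K)ᴴ * krausStack K := by
    rw [hS, dualId_krausMap, krausStack_conjTranspose_mul_self]
  have hcard : Fintype.card n ≤ Fintype.card ((n × m) × m) := by
    rcases isEmpty_or_nonempty n with _ | hn
    · simp
    · obtain ⟨a⟩ := hm hn
      exact Fintype.card_le_of_injective (fun i ↦ ((i, a), a)) fun i j h ↦ by simpa using h
  obtain ⟨W, hW, hWS⟩ := exists_isometry_mul_eq_of_conjTranspose_mul_self_eq hSK hcard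
  let E : n × m → Matrix m n ℂ := fun k ↦ Matrix.of fun a ↦ W (k, a)
  have hE : ∑ k, (E k)ᴴ * E k = 1 := (krausStack_conjTranspose_mul_self E).symm.trans hW
  have hES (k : n × m) : E k * S = K k :=
    Matrix.ext fun a i ↦ congrFun₂ hWS (k, a) i
  refine ⟨krausChannel E hE, fun ρ ↦ Finset.sum_congr rfl fun k _ ↦ ?_⟩
  rw [← hES, conjTranspose_mul]
  simp only [Matrix.mul_assoc]

end Stinespring

section PartialTrace

variable {a b : Type}

theorem ptraceL_add [Fintype a] (X Y : Matrix (a × b) (a × b) ℂ) :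
    ptraceL (X + Y) = ptraceL X + ptraceL Y :=
  Matrix.ext fun _ _ ↦ Finset.sum_add_distrib

theorem ptraceR_add [Fintype b] (X Y : Matrix (a × b) (a × b) ℂ) :
    ptraceR (X + Y) = ptraceR X + ptraceR Y :=
  Matrix.ext fun _ _ ↦ Finset.sum_add_distrib

theorem ptraceL_kronecker [Fintype a] (X : Matrix a a ℂ) (Y : Matrix b b ℂ) :
    ptraceL (X ⊗ₖ Y) = X.trace • Y :=
  Matrix.ext fun i j ↦ (Finset.sum_mul _ _ (Y i j)).symm

theorem ptraceR_kronecker [Fintype b] (X : Matrix a a ℂ) (Y : Matrix b b ℂ) :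
    ptraceR (X ⊗ₖ Y) = Y.trace • X :=
  Matrix.ext fun i j ↦ (Finset.mul_sum _ _ (X i j)).symm.trans (mul_comm _ _)

theorem trace_ptraceL [Fintype a] [Fintype b] (X : Matrix (a × b) (a × b) ℂ) :
    (ptraceL X).trace = X.trace :=
  (Fintype.sum_prod_type_right fun p ↦ X p p).symm

end PartialTrace

section Tensor

@[elab_as_elim]
theorem kronecker_induction {R l m n p : Type*} [CommSemiring R] [Finite l] [Finite m] [Finite n]
    [Finite p] {motive : Matrix (l × n) (m × p) R → Prop} (X : Matrix (l × n) (m × p) R)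
    (add : ∀ X Y, motive X → motive Y → motive (X + Y))
    (kronecker : ∀ X Y, motive (X ⊗ₖ Y)) : motive X := by
  classical
  induction X using Matrix.induction_on' with
  | h_zero => simpa using kronecker 0 0
  | h_add X Y hX hY => exact add X Y hX hY
  | h_std_basis i j x =>
    simpa [single_kronecker_single] using kronecker (single i.1 j.1 x) (single i.2 j.2 1)

variable {a b c d : Type} [Fintype a] [Fintype b] [DecidableEq a] [DecidableEq b]

/-- The tensor product `Φ ⊗ Ψ` of two super-operators, transported along
`L(H₁) ⊗ L(H₂) ≃ L(H₁ ⊗ H₂)`. -/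
def tensorMap (Φ : MatMap a c) (Ψ : MatMap b d) : MatMap (a × b) (c × d) :=
  TensorProduct.lift ((kroneckerBilinear (R := ℂ)).compl₁₂ Φ Ψ) ∘ₗ
    (kroneckerLinearEquiv a a b b ℂ).symm.toLinearMap

theorem tensorMap_kronecker (Φ : MatMap a c) (Ψ : MatMap b d) (X : Matrix a a ℂ)
    (Y : Matrix b b ℂ) : tensorMap Φ Ψ (X ⊗ₖ Y) = Φ X ⊗ₖ Ψ Y := by
  rw [tensorMap, LinearMap.comp_apply, LinearEquiv.coe_coe, kroneckerLinearEquiv_symm_kronecker]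
  rfl

theorem choiMatrix_tensorMap (Φ : MatMap a c) (Ψ : MatMap b d) :
    choiMatrix (tensorMap Φ Ψ) = (choiMatrix Φ ⊗ₖ choiMatrix Ψ).submatrix
      (Equiv.prodProdProdComm a b c d) (Equiv.prodProdProdComm a b c d) := by
  ext p q
  have h : single p.1 q.1 (1 : ℂ) = single p.1.1 q.1.1 1 ⊗ₖ single p.1.2 q.1.2 1 := by
    rw [single_kronecker_single, mul_one]
  rw [choiMatrix, h, tensorMap_kronecker]
  rfl

variable {Φ : MatMap a c} {Ψ : MatMap b d}

theorem IsCP.tensorMap [Fintype c] [Fintype d] (hΦ : IsCP Φ) (hΨ : IsCP Ψ) :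
    IsCP (tensorMap Φ Ψ) := by
  classical
  rw [IsCP, choiMatrix_tensorMap]
  exact (PosSemidef.kronecker hΦ hΨ).submatrix _

theorem IsTP.ptraceL_tensorMap [Fintype c] (hΦ : IsTP Φ) (Ψ : MatMap b d)
    (X : Matrix (a × b) (a × b) ℂ) :
    ptraceL (tensorMap Φ Ψ X) = Ψ (ptraceL X) := by
  induction X using kronecker_induction with
  | add X Y hX hY => rw [map_add, ptraceL_add, ptraceL_add, map_add, hX, hY]
  | kronecker X Y =>
    rw [tensorMap_kronecker, ptraceL_kronecker, ptraceL_kronecker, map_smul, hΦ]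

theorem IsTP.ptraceR_tensorMap [Fintype d] (hΨ : IsTP Ψ) (Φ : MatMap a c)
    (X : Matrix (a × b) (a × b) ℂ) :
    ptraceR (tensorMap Φ Ψ X) = Φ (ptraceR X) := by
  induction X using kronecker_induction with
  | add X Y hX hY => rw [map_add, ptraceR_add, ptraceR_add, map_add, hX, hY]
  | kronecker X Y =>
    rw [tensorMap_kronecker, ptraceR_kronecker, ptraceR_kronecker, map_smul, hΨ]

theorem IsTP.tensorMap [Fintype c] [Fintype d] (hΦ : IsTP Φ) (hΨ : IsTP Ψ) :
    IsTP (tensorMap Φ Ψ) := fun X ↦ by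
  rw [← trace_ptraceL, hΦ.ptraceL_tensorMap, hΨ, trace_ptraceL]

/-- The tensor product of two channels, acting on a composite system. -/
def Channel.tensor [Fintype c] [Fintype d] (E : Channel a c) (F : Channel b d) :
    Channel (a × b) (c × d) where
  map := _root_.tensorMap E.map F.map
  cp := E.cp.tensorMap F.cp
  tp := E.tp.tensorMap F.tp

end Tensor

section Postcomposition

theorem IsTP.nonempty {m n : Type} [Fintype m] [Fintype n] [Nonempty n] {Φ : MatMap n m}
    (hΦ : IsTP Φ) : Nonempty m := by
  classical
  by_contra hm
  rw [not_nonempty_iff] at hm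
  have h : (Fintype.card n : ℂ) = 0 := by
    rw [← trace_one, ← hΦ 1, trace_eq_zero_of_isEmpty]
  exact Fintype.card_ne_zero (Nat.cast_eq_zero.mp h)

variable {Θ Ξ k l m n p : Type} [Fintype Θ] [Fintype Ξ] [Fintype k] [Fintype l] [Fintype m]
  [Fintype n] [Fintype p] [DecidableEq n]

attribute [ext] Instrument

/-- The instrument that applies the channel `E x` after `I` has produced the outcome `x`. -/
def Instrument.postcomp [DecidableEq m] (I : Instrument Θ n m) (E : Θ → Channel m l) :
    Instrument Θ n l where
  op x := (E x).map ∘ₗ I.op x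
  cp x := (E x).cp.comp (I.cp x)
  tni x ρ hρ := ((E x).tp (I.op x ρ)).trans_le (I.tni x ρ hρ)
  tp ρ := by
    simpa only [LinearMap.sum_apply, LinearMap.comp_apply, trace_sum, (E _).tp _] using I.tp ρ

theorem InsCompatible.postcomp [DecidableEq m] [DecidableEq p] {I : Instrument Θ n m}
    {J : Instrument Ξ n p} (h : InsCompatible I J) (E : Θ → Channel m l) (F : Ξ → Channel p k) :
    InsCompatible (I.postcomp E) (J.postcomp F) := by
  obtain ⟨G, hGJ, hGI⟩ := h
  refine ⟨G.postcomp fun q ↦ (E q.1).tensor (F q.2), fun y ρ hρ ↦ ?_, fun x ρ hρ ↦ ?_⟩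
  · calc ∑ x, ptraceL (tensorMap (E x).map (F y).map (G.op (x, y) ρ))
        = (F y).map (∑ x, ptraceL (G.op (x, y) ρ)) := by
          simp only [(E _).tp.ptraceL_tensorMap, map_sum]
      _ = (F y).map (J.op y ρ) := by rw [hGJ y ρ hρ]
  · calc ∑ y, ptraceR (tensorMap (E x).map (F y).map (G.op (x, y) ρ))
        = (E x).map (∑ y, ptraceR (G.op (x, y) ρ)) := by
          simp only [(F _).tp.ptraceR_tensorMap, map_sum]
      _ = (E x).map (I.op x ρ) := by rw [hGI x ρ hρ]

theorem Instrument.exists_eq_postcomp (I : Instrument Θ n m) (L : Instrument Θ n n)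
    {S : Θ → Matrix n n ℂ} (hS : ∀ x, (S x)ᴴ * S x = dualId (I.op x))
    (hL : ∀ x ρ, L.op x ρ = S x * ρ * (S x)ᴴ) : ∃ E : Θ → Channel n m, I = L.postcomp E := by
  choose E hE using fun x ↦ (I.cp x).exists_channel_map_mul_mul_eq (fun _ ↦ I.tp.nonempty) (hS x)
  refine ⟨E, Instrument.ext (funext fun x ↦ LinearMap.ext fun ρ ↦ ?_)⟩
  calc I.op x ρ = (E x).map (S x * ρ * (S x)ᴴ) := (hE x ρ).symm
    _ = (E x).map (L.op x ρ) := by rw [hL]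

theorem Instrument.exists_eq_postcomp_luders (I : Instrument Θ n m) (A : POVM Θ n)
    (hA : ∀ x, A.elem x = dualId (I.op x)) (L : Instrument Θ n n)
    (hL : ∀ x ρ, L.op x ρ = (A.pos x).sqrt * ρ * (A.pos x).sqrt) :
    ∃ E : Θ → Channel n m, I = L.postcomp E := by
  refine I.exists_eq_postcomp L (S := fun x ↦ (A.pos x).sqrt) (fun x ↦ ?_) fun x ρ ↦ ?_
  · rw [conjTranspose_posSemidef_sqrt, posSemidef_sqrt_mul_self, hA]
  · rw [conjTranspose_posSemidef_sqrt, hL]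

end Postcomposition

/-- If the Lüders instruments of the induced POVMs of `I` and `J` are
compatible, then `I` and `J` are compatible. -/
theorem luders_compatible_implies_compatible
    [Fintype Ω] [Fintype Λ] [Fintype dH] [DecidableEq dH] [Fintype dK] [Fintype dV]
    (I : Instrument Ω dH dK) (J : Instrument Λ dH dV)
    (AI : POVM Ω dH) (hAI : ∀ x, AI.elem x = dualId (I.op x))
    (AJ : POVM Λ dH) (hAJ : ∀ y, AJ.elem y = dualId (J.op y))
    (LI : Instrument Ω dH dH)
    (hLI : ∀ x, ∀ ρ : Matrix dH dH ℂ, LI.op x ρ = (AI.pos x).sqrt * ρ * (AI.pos x).sqrt)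
    (LJ : Instrument Λ dH dH)
    (hLJ : ∀ y, ∀ ρ : Matrix dH dH ℂ, LJ.op y ρ = (AJ.pos y).sqrt * ρ * (AJ.pos y).sqrt)
    (h : InsCompatible LI LJ) :
    InsCompatible I J := by
  obtain ⟨E, rfl⟩ := I.exists_eq_postcomp_luders AI hAI LI hLI
  obtain ⟨F, rfl⟩ := J.exists_eq_postcomp_luders AJ hAJ LJ hLJ
  exact h.postcomp E F
end
end

section
/- Two measure-and-prepare instruments I ∈ Ins(Ω,H,K) and J ∈ Ins(Λ,H,V) are compatible if and only if their induced POVMs A^I and A^J are compatible. -/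
open scoped Kronecker ComplexOrder
open Matrix

noncomputable section

variable {Ω Λ dH dK dV dA dA' : Type}

/-!
The effects `dualId (G.op z)` of a joint instrument `G` form a joint POVM: partial traces preserve
the trace, so the marginals of `G` and the given instruments have the same outcome probabilities on
all states, and states span the matrix algebra. Conversely, a joint POVM `G` of `A` and `B` is
turned into a joint instrument by preparing `σ x ⊗ ξ y` upon the outcome `(x, y)`; tracing out one
factor leaves the state on the other and the corresponding margin of `G`.
-/

section PosSemidef

theorem trace_mul_nonneg_of_posSemidef {n 𝕜 : Type*} [Fintype n] [RCLike 𝕜] {M N : Matrix n n 𝕜}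
    (hM : M.PosSemidef) (hN : N.PosSemidef) : 0 ≤ (M * N).trace := by
  classical
  open scoped MatrixOrder in
  obtain ⟨R, rfl⟩ := CStarAlgebra.nonneg_iff_eq_star_mul_self.mp hN.nonneg
  rw [star_eq_conjTranspose, ← Matrix.mul_assoc, trace_mul_comm, ← Matrix.mul_assoc]
  exact (hM.mul_mul_conjTranspose_same R).trace_nonneg

open scoped MatrixOrder Matrix.Norms.L2Operator in
theorem span_setOf_posSemidef {n : Type*} [Finite n] :
    Submodule.span ℂ {M : Matrix n n ℂ | M.PosSemidef} = ⊤ := by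
  classical
  have := Fintype.ofFinite n
  simpa only [nonneg_iff_posSemidef] using CStarAlgebra.span_nonneg (A := Matrix n n ℂ)

end PosSemidef

section IsState

theorem IsState.kronecker [Fintype dK] [Fintype dV] {ρ : Matrix dK dK ℂ} {τ : Matrix dV dV ℂ}
    (hρ : IsState ρ) (hτ : IsState τ) : IsState (ρ ⊗ₖ τ) := by
  classical
  exact ⟨hρ.1.kronecker hτ.1, by rw [trace_kronecker, hρ.2, hτ.2, one_mul]⟩

theorem exists_isState_smul_eq [Fintype dH] {ρ : Matrix dH dH ℂ} (hρ : ρ.PosSemidef)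
    (hρ₀ : ρ ≠ 0) : ∃ (c : ℂ) (τ : Matrix dH dH ℂ), IsState τ ∧ c • τ = ρ := by
  have htrace : ρ.trace ≠ 0 := hρ.trace_eq_zero_iff.not.mpr hρ₀
  refine ⟨ρ.trace, ρ.trace⁻¹ • ρ, ⟨hρ.smul (inv_nonneg.mpr hρ.trace_nonneg), ?_⟩, ?_⟩
  · rw [trace_smul, smul_eq_mul, inv_mul_cancel₀ htrace]
  · exact smul_inv_smul₀ htrace ρ

theorem span_setOf_isState [Fintype dH] :
    Submodule.span ℂ {ρ : Matrix dH dH ℂ | IsState ρ} = ⊤ := by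
  rw [eq_top_iff, ← span_setOf_posSemidef, Submodule.span_le]
  intro ρ hρ
  obtain rfl | hρ₀ := eq_or_ne ρ 0
  · exact zero_mem _
  · obtain ⟨c, τ, hτ, rfl⟩ := exists_isState_smul_eq hρ hρ₀
    exact Submodule.smul_mem _ c (Submodule.subset_span hτ)

theorem linearMap_ext_of_isState [Fintype dH] {M : Type*} [AddCommMonoid M] [Module ℂ M]
    {f g : Matrix dH dH ℂ →ₗ[ℂ] M} (h : ∀ ρ, IsState ρ → f ρ = g ρ) : f = g :=
  LinearMap.ext_on span_setOf_isState h

end IsState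

section PartialTrace

theorem trace_ptraceL_s14 [Fintype dK] [Fintype dV] (M : Matrix (dK × dV) (dK × dV) ℂ) :
    (ptraceL M).trace = M.trace := by
  simp only [trace, diag_apply, ptraceL, Fintype.sum_prod_type]
  exact Finset.sum_comm

theorem trace_ptraceR [Fintype dK] [Fintype dV] (M : Matrix (dK × dV) (dK × dV) ℂ) :
    (ptraceR M).trace = M.trace := by
  simp only [trace, diag_apply, ptraceR, Fintype.sum_prod_type]

theorem ptraceL_smul_kronecker [Fintype dK] (c : ℂ) (M : Matrix dK dK ℂ) (N : Matrix dV dV ℂ) :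
    ptraceL (c • M ⊗ₖ N) = (c * M.trace) • N := by
  ext i j
  simp [ptraceL, trace, Finset.mul_sum, Finset.sum_mul, mul_assoc]

theorem ptraceR_smul_kronecker [Fintype dV] (c : ℂ) (M : Matrix dK dK ℂ) (N : Matrix dV dV ℂ) :
    ptraceR (c • M ⊗ₖ N) = (c * N.trace) • M := by
  ext i j
  simp [ptraceR, trace, Finset.mul_sum, mul_comm, mul_left_comm]

end PartialTrace

section Effect

variable [Fintype dH] [DecidableEq dH] [Fintype dK]

theorem trace_dualId_mul (Φ : MatMap dH dK) (ρ : Matrix dH dH ℂ) :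
    (dualId Φ * ρ).trace = (Φ ρ).trace := by
  suffices traceLinearMap dH ℂ ℂ ∘ₗ LinearMap.mulLeft ℂ (dualId Φ) = traceLinearMap dK ℂ ℂ ∘ₗ Φ from
    LinearMap.congr_fun this ρ
  refine ext_linearMap _ fun i j ↦ LinearMap.ext_ring ?_
  simp [dualId, trace_mul_single]

theorem dualId_sum {ι : Type*} (s : Finset ι) (Φ : ι → MatMap dH dK) :
    dualId (∑ x ∈ s, Φ x) = ∑ x ∈ s, dualId (Φ x) := by
  ext i j
  simp [dualId, Matrix.sum_apply, trace_sum]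

theorem dualId_eq_of_trace_eq [Fintype dV] {Φ : MatMap dH dK} {Ψ : MatMap dH dV}
    (h : ∀ ρ, IsState ρ → (Φ ρ).trace = (Ψ ρ).trace) : dualId Φ = dualId Ψ := by
  have htrace : traceLinearMap dK ℂ ℂ ∘ₗ Φ = traceLinearMap dV ℂ ℂ ∘ₗ Ψ :=
    linearMap_ext_of_isState h
  ext i j
  exact LinearMap.congr_fun htrace (single j i 1)

theorem IsTP.dualId_eq_one {Φ : MatMap dH dK} (hΦ : IsTP Φ) : dualId Φ = 1 := by
  ext i j
  rw [dualId, hΦ]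
  obtain rfl | hij := eq_or_ne i j
  · rw [trace_single_eq_same, one_apply_eq]
  · rw [trace_single_eq_of_ne _ _ _ hij.symm, one_apply_ne hij]

theorem IsCP.dualId_posSemidef {Φ : MatMap dH dK} (hΦ : IsCP Φ) : (dualId Φ).PosSemidef := by
  have hsum : dualId Φ = ∑ k, ((choiMatrix Φ).submatrix (fun i ↦ (i, k)) (fun i ↦ (i, k)))ᵀ := by
    ext i j
    simp [dualId, choiMatrix, Matrix.sum_apply, trace]
  rw [hsum]
  exact posSemidef_sum _ fun k _ ↦ (PosSemidef.submatrix hΦ _).transpose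

theorem IsCP.trace_apply_nonneg {Φ : MatMap dH dK} (hΦ : IsCP Φ) {ρ : Matrix dH dH ℂ}
    (hρ : ρ.PosSemidef) : 0 ≤ (Φ ρ).trace := by
  rw [← trace_dualId_mul]
  exact trace_mul_nonneg_of_posSemidef hΦ.dualId_posSemidef hρ

theorem isTNI_of_isCP_of_isTP_sum [Fintype Ω] {Φ : Ω → MatMap dH dK} (hcp : ∀ x, IsCP (Φ x))
    (htp : IsTP (∑ x, Φ x)) (x : Ω) : IsTNI (Φ x) := by
  intro ρ hρ
  rw [← htp ρ, LinearMap.sum_apply, trace_sum]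
  exact Finset.single_le_sum (fun z _ ↦ (hcp z).trace_apply_nonneg hρ) (Finset.mem_univ x)

end Effect

section InducedPOVM

variable [Fintype Ω] [Fintype Λ] [Fintype dH] [DecidableEq dH] [Fintype dK] [Fintype dV]

/-- The POVM `A^I` induced by an instrument `I`, consisting of the effects of its operations. -/
def Instrument.inducedPOVM (I : Instrument Ω dH dK) : POVM Ω dH where
  elem x := dualId (I.op x)
  pos x := (I.cp x).dualId_posSemidef
  sum_eq := by rw [← dualId_sum, I.tp.dualId_eq_one]

theorem InsCompatible.povmCompatible_inducedPOVM {I : Instrument Ω dH dK} {J : Instrument Λ dH dV}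
    (h : InsCompatible I J) : POVMCompatible I.inducedPOVM J.inducedPOVM := by
  obtain ⟨G, hJ, hI⟩ := h
  refine ⟨G.inducedPOVM, fun y ↦ ?_, fun x ↦ ?_⟩
  · calc ∑ x, dualId (G.op (x, y)) = dualId (∑ x, G.op (x, y)) := (dualId_sum _ _).symm
      _ = dualId (J.op y) := dualId_eq_of_trace_eq fun ρ hρ ↦ by
        simp only [← hJ y ρ hρ, LinearMap.sum_apply, trace_sum, trace_ptraceL_s14]
  · calc ∑ y, dualId (G.op (x, y)) = dualId (∑ y, G.op (x, y)) := (dualId_sum _ _).symm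
      _ = dualId (I.op x) := dualId_eq_of_trace_eq fun ρ hρ ↦ by
        simp only [← hI x ρ hρ, LinearMap.sum_apply, trace_sum, trace_ptraceR]

end InducedPOVM

section MeasureAndPrepare

/-- The measure-and-prepare operation `ρ ↦ tr[A ρ] τ`, for arbitrary matrices `A` and `τ`. -/
def measurePrepareMap [Fintype dH] (A : Matrix dH dH ℂ) (τ : Matrix dK dK ℂ) : MatMap dH dK :=
  (traceLinearMap dH ℂ ℂ ∘ₗ LinearMap.mulLeft ℂ A).smulRight τ

theorem measurePrepareMap_apply [Fintype dH] (A ρ : Matrix dH dH ℂ) (τ : Matrix dK dK ℂ) :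
    measurePrepareMap A τ ρ = (A * ρ).trace • τ :=
  rfl

theorem sum_measurePrepareMap [Fintype dH] {ι : Type*} (s : Finset ι) (A : ι → Matrix dH dH ℂ)
    (τ : Matrix dK dK ℂ) :
    ∑ x ∈ s, measurePrepareMap (A x) τ = measurePrepareMap (∑ x ∈ s, A x) τ := by
  ext1 ρ
  simp only [LinearMap.sum_apply, measurePrepareMap_apply, Finset.sum_mul, trace_sum,
    Finset.sum_smul]

variable [Fintype Ω] [Fintype Λ] [Fintype dH] [DecidableEq dH] [Fintype dK] [Fintype dV]

theorem isCP_measurePrepareMap {A : Matrix dH dH ℂ} {τ : Matrix dK dK ℂ} (hA : A.PosSemidef)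
    (hτ : τ.PosSemidef) : IsCP (measurePrepareMap A τ) := by
  classical
  have hchoi : choiMatrix (measurePrepareMap A τ) = Aᵀ ⊗ₖ τ := by
    ext ⟨i, k⟩ ⟨j, l⟩
    simp [choiMatrix, measurePrepareMap_apply, trace_mul_single]
  rw [IsCP, hchoi]
  exact hA.transpose.kronecker hτ

theorem dualId_measurePrepareMap (A : Matrix dH dH ℂ) (τ : Matrix dK dK ℂ) :
    dualId (measurePrepareMap A τ) = τ.trace • A := by
  ext i j
  simp [dualId, measurePrepareMap_apply, trace_mul_single, mul_comm]

theorem isTP_sum_measurePrepareMap {A : Ω → Matrix dH dH ℂ} {τ : Ω → Matrix dK dK ℂ}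
    (hA : ∑ x, A x = 1) (hτ : ∀ x, (τ x).trace = 1) :
    IsTP (∑ x, measurePrepareMap (A x) (τ x)) := by
  intro ρ
  calc ((∑ x, measurePrepareMap (A x) (τ x)) ρ).trace = ∑ x, (A x * ρ).trace := by
        simp [measurePrepareMap_apply, trace_sum, hτ]
    _ = ((∑ x, A x) * ρ).trace := by rw [Finset.sum_mul, trace_sum]
    _ = ρ.trace := by rw [hA, one_mul]

/-- The measure-and-prepare instrument `I_x(ρ) = tr[A(x) ρ] τ_x` of a POVM and a family of
states. -/
def measureAndPrepare (A : POVM Ω dH) (τ : Ω → Matrix dK dK ℂ) (hτ : ∀ x, IsState (τ x)) :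
    Instrument Ω dH dK where
  op x := measurePrepareMap (A.elem x) (τ x)
  cp x := isCP_measurePrepareMap (A.pos x) (hτ x).1
  tni := isTNI_of_isCP_of_isTP_sum (fun x ↦ isCP_measurePrepareMap (A.pos x) (hτ x).1)
    (isTP_sum_measurePrepareMap A.sum_eq fun x ↦ (hτ x).2)
  tp := isTP_sum_measurePrepareMap A.sum_eq fun x ↦ (hτ x).2

attribute [ext] Instrument POVM

theorem eq_measureAndPrepare {I : Instrument Ω dH dK} {A : POVM Ω dH} {τ : Ω → Matrix dK dK ℂ}
    (hτ : ∀ x, IsState (τ x)) (hI : ∀ x ρ, I.op x ρ = (A.elem x * ρ).trace • τ x) :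
    I = measureAndPrepare A τ hτ :=
  Instrument.ext <| funext fun x ↦ LinearMap.ext (hI x)

theorem inducedPOVM_measureAndPrepare (A : POVM Ω dH) (τ : Ω → Matrix dK dK ℂ)
    (hτ : ∀ x, IsState (τ x)) : (measureAndPrepare A τ hτ).inducedPOVM = A :=
  POVM.ext <| funext fun x ↦ by
    simp only [Instrument.inducedPOVM, measureAndPrepare, dualId_measurePrepareMap, (hτ x).2,
      one_smul]

theorem POVMCompatible.insCompatible_measureAndPrepare {A : POVM Ω dH} {B : POVM Λ dH}
    (h : POVMCompatible A B) {σ : Ω → Matrix dK dK ℂ} (hσ : ∀ x, IsState (σ x))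
    {ξ : Λ → Matrix dV dV ℂ} (hξ : ∀ y, IsState (ξ y)) :
    InsCompatible (measureAndPrepare A σ hσ) (measureAndPrepare B ξ hξ) := by
  obtain ⟨G, hB, hA⟩ := h
  refine ⟨measureAndPrepare G (fun z ↦ σ z.1 ⊗ₖ ξ z.2) fun z ↦ (hσ z.1).kronecker (hξ z.2),
    fun y ρ _ ↦ ?_, fun x ρ _ ↦ ?_⟩
  · calc ∑ x, ptraceL (measurePrepareMap (G.elem (x, y)) (σ x ⊗ₖ ξ y) ρ)
        = ∑ x, measurePrepareMap (G.elem (x, y)) (ξ y) ρ := by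
          simp only [measurePrepareMap_apply, ptraceL_smul_kronecker, (hσ _).2, mul_one]
      _ = measurePrepareMap (B.elem y) (ξ y) ρ := by
          rw [← LinearMap.sum_apply, sum_measurePrepareMap, hB]
  · calc ∑ y, ptraceR (measurePrepareMap (G.elem (x, y)) (σ x ⊗ₖ ξ y) ρ)
        = ∑ y, measurePrepareMap (G.elem (x, y)) (σ x) ρ := by
          simp only [measurePrepareMap_apply, ptraceR_smul_kronecker, (hξ _).2, mul_one]
      _ = measurePrepareMap (A.elem x) (σ x) ρ := by
          rw [← LinearMap.sum_apply, sum_measurePrepareMap, hA]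

end MeasureAndPrepare

/-- Two measure-and-prepare instruments are compatible if and only if
their induced (i.e. measured) POVMs are compatible. -/
theorem map_instruments_compatible_iff_povms_compatible
    [Fintype Ω] [Fintype Λ] [Fintype dH] [DecidableEq dH] [Fintype dK] [Fintype dV]
    (I : Instrument Ω dH dK) (J : Instrument Λ dH dV)
    (A : POVM Ω dH) (σ : Ω → Matrix dK dK ℂ) (hσ : ∀ x, IsState (σ x))
    (hI : ∀ x, ∀ ρ : Matrix dH dH ℂ, I.op x ρ = ((A.elem x * ρ).trace) • σ x)
    (B : POVM Λ dH) (ξ : Λ → Matrix dV dV ℂ) (hξ : ∀ y, IsState (ξ y))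
    (hJ : ∀ y, ∀ ρ : Matrix dH dH ℂ, J.op y ρ = ((B.elem y * ρ).trace) • ξ y) :
    InsCompatible I J ↔ POVMCompatible A B := by
  obtain rfl := eq_measureAndPrepare hσ hI
  obtain rfl := eq_measureAndPrepare hξ hJ
  refine ⟨fun h ↦ ?_, fun h ↦ h.insCompatible_measureAndPrepare hσ hξ⟩
  simpa only [inducedPOVM_measureAndPrepare] using h.povmCompatible_inducedPOVM
end
end
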